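/- Let T > 0 and β be a real constant with 0 < β < 1/(2T). Then the boundary value problem ((u'/√(1+u'²)))' = β cos(u), u(0) = u(T) = u'(T), has at least one solution u ∈ C¹([0,T]) with u'/√(1+u'²) continuously differentiable. -/

import Mathlib

open Set

/-- The truncation of the real line to `[-M, M]`. -/
noncomputable def clipM (M v : ℝ) : ℝ := max (-M) (min M v)

/-- The inverse of `y / √(1+y²)`, truncated. -/
noncomputable def gM (M v : ℝ) : ℝ := clipM M v / Real.sqrt (1 - (clipM M v) ^ 2)

lemma clipM_mem {M : ℝ} (hM : 0 < M) (v : ℝ) : clipM M v ∈ Icc (-M) M :=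
  ⟨le_max_left _ _, max_le (by linarith) (min_le_left _ _)⟩

lemma clipM_of_mem {M v : ℝ} (h1 : -M ≤ v) (h2 : v ≤ M) : clipM M v = v := by
  unfold clipM
  rw [min_eq_right h2, max_eq_right h1]

lemma clipM_pos {M : ℝ} (hM : 0 < M) (hM1 : M < 1) (v : ℝ) : 0 < 1 - (clipM M v) ^ 2 := by
  have h := clipM_mem hM v
  nlinarith [h.1, h.2]

lemma gM_lip {M : ℝ} (hM : 0 < M) (hM1 : M < 1) : ∃ K, LipschitzWith K (gM M) := by
  have h1 : ContDiffOn ℝ 1 (fun p : ℝ => p / Real.sqrt (1 - p ^ 2)) (Icc (-M) M) := by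
    have hp : ∀ p ∈ Icc (-M) M, 0 < 1 - p ^ 2 := fun p hp => by nlinarith [hp.1, hp.2]
    refine ContDiffOn.div contDiffOn_id ?_ ?_
    · refine ContDiffOn.sqrt (by fun_prop) (fun p h => (hp p h).ne')
    · intro p h
      exact (Real.sqrt_pos.2 (hp p h)).ne'
  obtain ⟨K, hK⟩ := h1.exists_lipschitzOnWith one_ne_zero (convex_Icc _ _) isCompact_Icc
  have h2 : LipschitzWith 1 (clipM M) := (LipschitzWith.id.const_min _).const_max _
  refine ⟨K * 1, ?_⟩
  rw [← lipschitzOnWith_univ]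
  exact hK.comp (lipschitzOnWith_univ.2 h2) (fun v _ => clipM_mem hM v)

lemma gM_bound {M : ℝ} (hM : 0 < M) (hM1 : M < 1) (v : ℝ) :
    |gM M v| ≤ 1 / Real.sqrt (1 - M ^ 2) := by
  unfold gM
  have h := clipM_mem hM v
  have h0 : 0 < 1 - M ^ 2 := by nlinarith
  rw [abs_div, abs_of_nonneg (Real.sqrt_nonneg _)]
  refine div_le_div₀ zero_le_one ?_ (Real.sqrt_pos.2 h0) (Real.sqrt_le_sqrt ?_)
  · rw [abs_le]; constructor <;> linarith [h.1, h.2]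
  · nlinarith [h.1, h.2]

lemma phi_gM {M : ℝ} (hM : 0 < M) (hM1 : M < 1) (v : ℝ) :
    gM M v / Real.sqrt (1 + (gM M v) ^ 2) = clipM M v := by
  have h := clipM_pos hM hM1 v
  have hs := Real.sqrt_pos.2 h
  have h1 : 1 + (gM M v) ^ 2 = (1 / Real.sqrt (1 - (clipM M v) ^ 2)) ^ 2 := by
    unfold gM
    rw [div_pow, div_pow, Real.sq_sqrt h.le]
    field_simp
    ring
  rw [h1, Real.sqrt_sq (by positivity)]
  unfold gM
  field_simp

lemma gM_nonneg {M v : ℝ} (hM : 0 < M) (hv : 0 ≤ v) : 0 ≤ gM M v := by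
  unfold gM
  refine div_nonneg ?_ (Real.sqrt_nonneg _)
  exact le_max_of_le_right (le_min hM.le hv)

lemma gM_nonpos {M v : ℝ} (hM : 0 < M) (hv : v ≤ 0) : gM M v ≤ 0 := by
  unfold gM
  refine div_nonpos_of_nonpos_of_nonneg ?_ (Real.sqrt_nonneg _)
  exact max_le (by linarith) (min_le_of_right_le hv)

/-- Family of solutions of the truncated system, continuous in the parameter. -/
lemma flow_exists {T β M : ℝ} (hT : 0 < T) (hβ : 0 < β) (hM : 0 < M) (hM1 : M < 1) :
    ∃ α : ℝ → ℝ → ℝ × ℝ, (∀ d ∈ Icc (-(1/2) : ℝ) (1/2), α d T = (gM M d, d) ∧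
      ∀ t ∈ Icc (-1) (T + 1), HasDerivWithinAt (α d)
        (gM M (α d t).2, β * Real.cos (α d t).1) (Icc (-1) (T + 1)) t) ∧
      ContinuousOn (fun d => α d 0) (Icc (-(1/2)) (1/2)) := by
  obtain ⟨K, hK⟩ := gM_lip hM hM1
  set B : ℝ := 1 / Real.sqrt (1 - M ^ 2) with hB
  have hB0 : 0 ≤ B := by positivity
  let L : NNReal := ⟨B + β, by positivity⟩
  let r : NNReal := ⟨B + 1, by positivity⟩
  let a : NNReal := ⟨(B + 1) + (B + β) * (T + 1), by positivity⟩
  let F : ℝ × ℝ → ℝ × ℝ := fun x => (gM M x.2, β * Real.cos x.1)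
  have hcos : LipschitzWith (⟨β, hβ.le⟩ : NNReal) (fun x : ℝ => β * Real.cos x) := by
    refine LipschitzWith.of_dist_le_mul fun x y => ?_
    have h2 : |Real.cos x - Real.cos y| ≤ |x - y| := by
      have := Convex.norm_image_sub_le_of_norm_hasDerivWithin_le (f := Real.cos)
        (f' := fun x => -Real.sin x) (s := univ) (C := 1) (x := y) (y := x)
        (fun x _ => (Real.hasDerivAt_cos x).hasDerivWithinAt)
        (fun x _ => by simpa using Real.abs_sin_le_one x) convex_univ trivial trivial
      simpa using this
    rw [Real.dist_eq, Real.dist_eq, ← mul_sub, abs_mul, abs_of_pos hβ]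
    exact mul_le_mul_of_nonneg_left h2 hβ.le
  have hF : LipschitzWith (max (K * 1) (⟨β, hβ.le⟩ * 1)) F :=
    (hK.comp LipschitzWith.prod_snd).prodMk (hcos.comp LipschitzWith.prod_fst)
  let t₀ : Icc (-1 : ℝ) (T + 1) := ⟨T, by linarith, by linarith⟩
  have hP : IsPicardLindelof (fun _ => F) t₀ (0 : ℝ × ℝ) a r L (max (K * 1) (⟨β, hβ.le⟩ * 1)) := by
    refine IsPicardLindelof.of_time_independent ?_ hF.lipschitzOnWith ?_
    · intro x _
      show ‖F x‖ ≤ B + β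
      rw [Prod.norm_def]
      refine max_le ?_ ?_
      · have := gM_bound hM hM1 x.2
        show |gM M x.2| ≤ _
        linarith
      · show |β * Real.cos x.1| ≤ _
        rw [abs_mul, abs_of_pos hβ]
        nlinarith [Real.abs_cos_le_one x.1]
    · show (B + β) * max (T + 1 - T) (T - (-1)) ≤ ((B + 1) + (B + β) * (T + 1)) - (B + 1)
      rw [max_eq_right (by linarith)]
      linarith
  obtain ⟨α, h1, h2⟩ := hP.exists_forall_mem_closedBall_eq_hasDerivWithinAt_continuousOn
  have hmem : ∀ d ∈ Icc (-(1/2) : ℝ) (1/2), (gM M d, d) ∈ Metric.closedBall (0 : ℝ × ℝ) r := by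
    intro d hd
    rw [mem_closedBall_zero_iff, Prod.norm_def]
    show max |gM M d| |d| ≤ B + 1
    refine max_le ?_ ?_
    · have := gM_bound hM hM1 d
      linarith
    · rw [abs_le]; constructor <;> linarith [hd.1, hd.2]
  refine ⟨fun d t => α ((gM M d, d), t), fun d hd => ⟨(h1 _ (hmem d hd)).1, (h1 _ (hmem d hd)).2⟩, ?_⟩
  have hg := hK.continuous
  refine h2.comp (f := fun d : ℝ => ((gM M d, d), (0 : ℝ))) (by fun_prop) ?_
  intro d hd
  exact ⟨hmem d hd, by constructor <;> linarith⟩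

theorem stmt_15 (T β : ℝ) (hT : 0 < T) (hβ : 0 < β) (hβT : β < 1 / (2 * T)) :
    ∃ u : ℝ → ℝ, ContDiff ℝ 1 u ∧
      (∀ t ∈ Set.Icc (0:ℝ) T,
        HasDerivAt (fun s => deriv u s / Real.sqrt (1 + (deriv u s) ^ 2))
          (β * Real.cos (u t)) t) ∧
      u 0 = u T ∧ u T = deriv u T := by
  have hbt : β * T < 1 / 2 := by
    rw [lt_div_iff₀ (by positivity)] at hβT
    linarith
  have hbt0 : 0 < β * T := by positivity
  obtain ⟨M, hM2, hM1⟩ : ∃ M, 1 / 2 + β * T < M ∧ M < 1 := exists_between (by linarith)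
  have hM : 0 < M := by linarith
  obtain ⟨α, hα, hc⟩ := flow_exists hT hβ hM hM1
  obtain ⟨K, hK⟩ := gM_lip hM hM1
  -- components
  have hu : ∀ d ∈ Icc (-(1/2) : ℝ) (1/2), ∀ t ∈ Icc (-1) (T + 1),
      HasDerivWithinAt (fun t => (α d t).1) (gM M (α d t).2) (Icc (-1) (T + 1)) t := by
    intro d hd t ht
    exact (hasFDerivAt_fst (𝕜 := ℝ) (p := α d t)).comp_hasDerivWithinAt t ((hα d hd).2 t ht)
  have hv : ∀ d ∈ Icc (-(1/2) : ℝ) (1/2), ∀ t ∈ Icc (-1) (T + 1),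
      HasDerivWithinAt (fun t => (α d t).2) (β * Real.cos (α d t).1) (Icc (-1) (T + 1)) t := by
    intro d hd t ht
    exact (hasFDerivAt_snd (𝕜 := ℝ) (p := α d t)).comp_hasDerivWithinAt t ((hα d hd).2 t ht)
  have hsub : Icc 0 T ⊆ Icc (-1) (T + 1) := Icc_subset_Icc (by linarith) (by linarith)
  have hvb : ∀ d ∈ Icc (-(1/2) : ℝ) (1/2), ∀ t ∈ Icc 0 T, |(α d t).2 - d| ≤ β * T := by
    intro d hd t ht
    have := Convex.norm_image_sub_le_of_norm_hasDerivWithin_le (C := β) (x := T) (y := t)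
      (fun s hs => hv d hd s hs) (fun s _ => by
        rw [Real.norm_eq_abs, abs_mul, abs_of_pos hβ]
        nlinarith [Real.abs_cos_le_one (α d s).1]) (convex_Icc _ _)
      ⟨by linarith, by linarith⟩ (hsub ht)
    rw [(hα d hd).1] at this
    simp only [Real.norm_eq_abs] at this
    refine this.trans (mul_le_mul_of_nonneg_left ?_ hβ.le)
    rw [abs_le]; constructor <;> linarith [ht.1, ht.2]
  have hint : ∀ d ∈ Icc (-(1/2) : ℝ) (1/2), ContinuousOn (fun t => (α d t).1) (Icc 0 T) ∧
      ∀ x ∈ interior (Icc 0 T), HasDerivWithinAt (fun t => (α d t).1) (gM M (α d x).2)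
        (interior (Icc 0 T)) x := by
    intro d hd
    exact ⟨fun t ht => (hu d hd t (hsub ht)).continuousWithinAt.mono hsub,
      fun x hx => (hu d hd x (hsub (interior_subset hx))).mono (interior_subset.trans hsub)⟩
  have h0T : (0 : ℝ) ∈ Icc 0 T := ⟨le_rfl, hT.le⟩
  have hTT : T ∈ Icc 0 T := ⟨hT.le, le_rfl⟩
  -- shooting
  obtain ⟨d, hd, hd0⟩ : ∃ d ∈ Icc (-(1/2) : ℝ) (1/2), gM M d - (α d 0).1 = 0 := by
    have hcont : ContinuousOn (fun d => gM M d - (α d 0).1) (Icc (-(1/2)) (1/2)) :=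
      hK.continuous.continuousOn.sub (continuous_fst.comp_continuousOn hc)
    have hle : (-(1/2) : ℝ) ≤ 1/2 := by norm_num
    have hl : gM M (-(1/2)) - (α (-(1/2)) 0).1 ≤ 0 := by
      have hd := left_mem_Icc.2 hle
      have hanti := antitoneOn_of_hasDerivWithinAt_nonpos (convex_Icc 0 T) (hint _ hd).1
        (hint _ hd).2 (fun x hx => gM_nonpos hM (by
          have := abs_le.1 (hvb _ hd x (interior_subset hx)); linarith [this.2]))
      have := hanti h0T hTT hT.le
      simp only [(hα _ hd).1] at this
      linarith
    have hr : 0 ≤ gM M (1/2) - (α (1/2) 0).1 := by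
      have hd := right_mem_Icc.2 hle
      have hmono := monotoneOn_of_hasDerivWithinAt_nonneg (convex_Icc 0 T) (hint _ hd).1
        (hint _ hd).2 (fun x hx => gM_nonneg hM (by
          have := abs_le.1 (hvb _ hd x (interior_subset hx)); linarith [this.1]))
      have := hmono h0T hTT hT.le
      simp only [(hα _ hd).1] at this
      linarith
    obtain ⟨d, hd, h⟩ := intermediate_value_Icc hle hcont ⟨hl, hr⟩
    exact ⟨d, hd, h⟩
  have hle : (-1 : ℝ) ≤ T + 1 := by linarith
  set V : ℝ → ℝ := fun t => (α d (projIcc (-1) (T + 1) hle t)).2 with hV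
  have hVeq : ∀ t ∈ Icc (-1) (T + 1), V t = (α d t).2 := fun t ht => by
    simp only [hV, projIcc_of_mem hle ht]
  have hVc : Continuous V := by
    have : ContinuousOn (fun t => (α d t).2) (Icc (-1) (T + 1)) :=
      fun t ht => (hv d hd t ht).continuousWithinAt
    exact this.domRestrict.comp continuous_projIcc
  have hgV : Continuous (fun t => gM M (V t)) := hK.continuous.comp hVc
  set U : ℝ → ℝ := fun t => gM M d + ∫ s in T..t, gM M (V s) with hU
  have hUd : ∀ t, HasDerivAt U (gM M (V t)) t := fun t =>
    (hgV.integral_hasStrictDerivAt T t).hasDerivAt.const_add _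
  have hdU : deriv U = fun t => gM M (V t) := funext fun t => (hUd t).deriv
  have hUeq : ∀ t ∈ Icc (0 : ℝ) T, U t = (α d t).1 := by
    intro t ht
    have h := intervalIntegral.integral_eq_sub_of_hasDerivAt_of_le (a := t) (b := T)
      (f := fun t => (α d t).1) (f' := fun t => gM M (V t)) ht.2
      (fun s hs => ((hint d hd).1 s ⟨ht.1.trans hs.1, hs.2⟩).mono (Icc_subset_Icc ht.1 le_rfl))
      (fun s hs => by
        have hs' : s ∈ Icc (-1) (T + 1) := ⟨by linarith [hs.1, ht.1], by linarith [hs.2]⟩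
        simp only [hVeq s hs']
        exact (hu d hd s hs').hasDerivAt (Icc_mem_nhds (by linarith [hs.1, ht.1])
          (by linarith [hs.2])))
      (hgV.intervalIntegrable _ _)
    simp only [hU]
    rw [intervalIntegral.integral_symm, h, (hα d hd).1]
    ring
  have hUT : U T = gM M d := by simp [hU]
  have hVT : V T = d := by rw [hVeq T (hsub hTT), (hα d hd).1]
  refine ⟨U, ?_, ?_, ?_, ?_⟩
  · rw [contDiff_one_iff_deriv, hdU]
    exact ⟨fun t => (hUd t).differentiableAt, hgV⟩
  · intro t ht
    simp only [hdU, phi_gM hM hM1]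
    have h1 : HasDerivAt (fun t => (α d t).2) (β * Real.cos (U t)) t := by
      rw [hUeq t ht]
      exact (hv d hd t (hsub ht)).hasDerivAt (Icc_mem_nhds (by linarith [ht.1])
          (by linarith [ht.2]))
    have hb := abs_le.1 (hvb d hd t ht)
    refine h1.congr_of_eventuallyEq ?_
    have hIo : Ioo (-1) (T + 1) ∈ nhds t := Ioo_mem_nhds (by linarith [ht.1]) (by linarith [ht.2])
    have hVo : ∀ᶠ s in nhds t, V s ∈ Ioo (-M) M := by
      refine hVc.continuousAt.eventually_mem (Ioo_mem_nhds ?_ ?_) <;>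
        rw [hVeq t (hsub ht)] <;> linarith [hb.1, hb.2, hd.1, hd.2]
    filter_upwards [hIo, hVo] with s hs hs2
    rw [clipM_of_mem hs2.1.le hs2.2.le, hVeq s (Ioo_subset_Icc_self hs)]
  · rw [hUT, hUeq 0 h0T]
    linarith
  · rw [hUT, hdU]
    simp only [hVT]
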